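/- Let $1<\alpha,\beta<\infty$ and $0<p\leqslant q<\infty$ with $q\geqslant 2$ and $\beta p\leqslant\alpha q$. Suppose $C>0$ is a constant such that for all positive integers $m,n$ and every complex polynomial $P\in\mathbb{C}[z_1,\dots,z_n]$ of degree $m$ one has $\|P\|_{A_\beta^q(\mathbb{D}^n)}\leqslant C^m\|P\|_{A_\alpha^p(\mathbb{D}^n)}$. Then $C\geqslant\sqrt{\alpha q/(\beta p)}$. -/

import Mathlib

open MeasureTheory Metric

/-- The weighted Bergman measure `dA_α(z) = (α-1)(1-|z|²)^(α-2) dA(z)` on the unit disk,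
where `dA = dx dy / π` is the normalized area measure. -/
noncomputable def bergmanMeasure (α : ℝ) : Measure ℂ :=
  ((volume : Measure ℂ).restrict (ball (0 : ℂ) 1)).withDensity
    fun z => ENNReal.ofReal ((α - 1) * (1 - ‖z‖ ^ 2) ^ (α - 2) / Real.pi)

/-- The product Bergman measure `dA_α(z₁) ⋯ dA_α(zₙ)` on the polydisc. -/
noncomputable def bergmanMeasurePi (n : ℕ) (α : ℝ) : Measure (Fin n → ℂ) :=
  Measure.pi fun _ => bergmanMeasure α

/-- The radial integral `∫₀¹ (α-1) · 2r · (1 - r²)^(α-2) · r^(2j) dr`, which is the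
`2j`-th absolute moment of the Bergman measure. -/
noncomputable def bergmanRadialMoment (α : ℝ) (j : ℕ) : ℝ :=
  ∫ r in (0 : ℝ)..1, (α - 1) * (2 * r) * (1 - r ^ 2) ^ (α - 2) * r ^ (2 * j)

theorem hasDerivAt_one_sub_sq_rpow (α : ℝ) {r : ℝ} (hr : r ∈ Set.Ioo (0 : ℝ) 1) :
    HasDerivAt (fun r : ℝ => (1 - r ^ 2) ^ (α - 1))
      (-((α - 1) * (2 * r) * (1 - r ^ 2) ^ (α - 2))) r := by
  have h0 : (1 - r ^ 2 : ℝ) ≠ 0 := by nlinarith [hr.1, hr.2]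
  have h1 : HasDerivAt (fun r : ℝ => 1 - r ^ 2) (-(2 * r)) r := by
    simpa using (hasDerivAt_pow 2 r).const_sub 1
  convert! h1.rpow_const (p := α - 1) (Or.inl h0) using 1
  rw [show α - 1 - 1 = α - 2 by ring]
  ring

theorem continuousOn_one_sub_sq_rpow {α : ℝ} (hα : 1 < α) :
    ContinuousOn (fun r : ℝ => (1 - r ^ 2) ^ (α - 1)) (Set.Icc 0 1) :=
  ContinuousOn.rpow_const (by fun_prop) fun _ _ => Or.inr (by linarith)

theorem intervalIntegrable_bergmanRadial {α : ℝ} (hα : 1 < α) (g : ℝ → ℝ) (hg : Continuous g) :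
    IntervalIntegrable (fun r : ℝ => (α - 1) * (2 * r) * (1 - r ^ 2) ^ (α - 2) * g r)
      volume 0 1 := by
  refine IntervalIntegrable.mul_continuousOn ?_ hg.continuousOn
  refine intervalIntegral.intervalIntegrable_deriv_of_nonneg
    (g := fun r : ℝ => -(1 - r ^ 2) ^ (α - 1)) ?_ ?_ ?_
  · rw [Set.uIcc_of_le zero_le_one]
    exact (continuousOn_one_sub_sq_rpow hα).neg
  · intro r hr
    rw [min_eq_left zero_le_one, max_eq_right zero_le_one] at hr
    simpa using! (hasDerivAt_one_sub_sq_rpow α hr).neg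
  · intro r hr
    rw [min_eq_left zero_le_one, max_eq_right zero_le_one] at hr
    have : 0 ≤ 1 - r ^ 2 := by nlinarith [hr.1, hr.2]
    have := Real.rpow_nonneg this (α - 2)
    have := hr.1.le
    have : 0 ≤ α - 1 := by linarith
    positivity

theorem bergmanRadialMoment_zero {α : ℝ} (hα : 1 < α) : bergmanRadialMoment α 0 = 1 := by
  have h := intervalIntegral.integral_eq_sub_of_hasDerivAt_of_le zero_le_one
    (continuousOn_one_sub_sq_rpow hα).neg
    (fun r hr => (hasDerivAt_one_sub_sq_rpow α hr).neg)
    (by simpa using intervalIntegrable_bergmanRadial hα (fun _ => 1) continuous_const)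
  have h0 : (0 : ℝ) ^ (α - 1) = 0 := Real.zero_rpow (by linarith)
  simpa [bergmanRadialMoment, h0] using h

theorem bergmanRadialMoment_succ {α : ℝ} (hα : 1 < α) (j : ℕ) :
    (j + α) * bergmanRadialMoment α (j + 1) = (j + 1) * bergmanRadialMoment α j := by
  have hi := fun i : ℕ =>
    intervalIntegrable_bergmanRadial hα (fun r => r ^ (2 * i)) (by fun_prop)
  have hd : ∀ r ∈ Set.Ioo (0 : ℝ) 1,
      HasDerivAt (fun r : ℝ => (α - 1) * (r ^ (2 * j + 2) * (1 - r ^ 2) ^ (α - 1)))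
        ((j + 1) * ((α - 1) * (2 * r) * (1 - r ^ 2) ^ (α - 2) * r ^ (2 * j)) -
          (j + α) * ((α - 1) * (2 * r) * (1 - r ^ 2) ^ (α - 2) * r ^ (2 * (j + 1)))) r := by
    intro r hr
    have h0 : (0 : ℝ) < 1 - r ^ 2 := by nlinarith [hr.1, hr.2]
    convert! ((hasDerivAt_pow (2 * j + 2) r).mul
      (hasDerivAt_one_sub_sq_rpow α hr)).const_mul (α - 1) using 1
    have h1 : (1 - r ^ 2 : ℝ) ^ (α - 1) = (1 - r ^ 2) ^ (α - 2) * (1 - r ^ 2) := by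
      rw [← Real.rpow_add_one h0.ne']
      ring_nf
    rw [h1]
    push_cast
    ring
  have h := intervalIntegral.integral_eq_sub_of_hasDerivAt_of_le zero_le_one
    (continuousOn_const.mul (ContinuousOn.mul (by fun_prop) (continuousOn_one_sub_sq_rpow hα)))
    hd (((hi j).const_mul _).sub ((hi (j + 1)).const_mul _))
  rw [intervalIntegral.integral_sub ((hi j).const_mul _) ((hi (j + 1)).const_mul _),
    intervalIntegral.integral_const_mul, intervalIntegral.integral_const_mul] at h
  have h0 : (0 : ℝ) ^ (α - 1) = 0 := Real.zero_rpow (by linarith)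
  simp [h0] at h
  unfold bergmanRadialMoment
  linarith

theorem bergmanRadialMoment_one {α : ℝ} (hα : 1 < α) : bergmanRadialMoment α 1 = α⁻¹ := by
  have h := bergmanRadialMoment_succ hα 0
  rw [bergmanRadialMoment_zero hα] at h
  have : α ≠ 0 := by linarith
  field_simp
  simpa [mul_comm] using h

theorem bergmanRadialMoment_le {α : ℝ} (hα : 1 < α) (j : ℕ) :
    bergmanRadialMoment α j ≤ j.factorial * α⁻¹ ^ j := by
  induction j with
  | zero => simp [bergmanRadialMoment_zero hα]
  | succ j ih =>
    have h0 : 0 < α := by linarith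
    have hj : (0 : ℝ) < j + α := by positivity
    have h : bergmanRadialMoment α (j + 1) = (j + 1) / (j + α) * bergmanRadialMoment α j := by
      field_simp
      linarith [bergmanRadialMoment_succ hα j]
    rw [h]
    calc (j + 1) / (j + α) * bergmanRadialMoment α j
        ≤ (j + 1) / (j + α) * (j.factorial * α⁻¹ ^ j) := by gcongr
      _ ≤ (j + 1) / α * (j.factorial * α⁻¹ ^ j) := by
          gcongr
          linarith [(Nat.cast_nonneg j : (0 : ℝ) ≤ j)]
      _ = ((j + 1).factorial : ℕ) * α⁻¹ ^ (j + 1) := by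
          rw [Nat.factorial_succ]; push_cast; rw [pow_succ]; field_simp

/-- The radial weight of the Bergman measure, extended by zero. -/
noncomputable def bergmanWeight (α r : ℝ) : ℝ :=
  (Set.Iio (1 : ℝ)).indicator (fun r => (α - 1) * (1 - r ^ 2) ^ (α - 2) / Real.pi) r

theorem measurable_bergmanWeight (α : ℝ) : Measurable (bergmanWeight α) := by
  refine Measurable.indicator ?_ measurableSet_Iio
  fun_prop

theorem measurable_ofReal_bergmanWeight_norm (α : ℝ) :
    Measurable fun z : ℂ => ENNReal.ofReal (bergmanWeight α ‖z‖) :=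
  ((measurable_bergmanWeight α).comp measurable_norm).ennreal_ofReal

theorem bergmanWeight_nonneg {α : ℝ} (hα : 1 < α) {r : ℝ} (hr : 0 ≤ r) :
    0 ≤ bergmanWeight α r := by
  refine Set.indicator_apply_nonneg fun h => ?_
  have h1 : 0 ≤ 1 - r ^ 2 := by nlinarith [Set.mem_Iio.1 h]
  have := Real.rpow_nonneg h1 (α - 2)
  have : 0 ≤ α - 1 := by linarith
  positivity

theorem bergmanMeasure_eq_withDensity (α : ℝ) :
    bergmanMeasure α =
      (volume : Measure ℂ).withDensity fun z => ENNReal.ofReal (bergmanWeight α ‖z‖) := by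
  rw [bergmanMeasure, ← withDensity_indicator measurableSet_ball]
  congr 1
  ext z
  by_cases hz : ‖z‖ < 1 <;> simp [bergmanWeight, hz]

theorem integrable_bergmanWeight {α : ℝ} (hα : 1 < α) :
    Integrable (fun z : ℂ => bergmanWeight α ‖z‖) := by
  rw [integrable_fun_norm_addHaar]
  have h := (intervalIntegrable_bergmanRadial hα (fun _ => (2 * Real.pi)⁻¹) continuous_const).1
  have h' := h.mono_set (s := Set.Ioo 0 1) Set.Ioo_subset_Ioc_self
  rw [← integrable_indicator_iff measurableSet_Ioo] at h'
  rw [← integrable_indicator_iff measurableSet_Ioi]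
  refine h'.congr (Filter.Eventually.of_forall fun r => ?_)
  have := Real.pi_ne_zero
  by_cases h0 : 0 < r <;> by_cases h1 : r < 1 <;> simp [bergmanWeight, h0, h1]
  field_simp

theorem integral_norm_pow_bergmanMeasure {α : ℝ} (hα : 1 < α) (j : ℕ) :
    ∫ z, ‖z‖ ^ (2 * j) ∂(bergmanMeasure α) = bergmanRadialMoment α j := by
  rw [bergmanMeasure_eq_withDensity, integral_withDensity_eq_integral_toReal_smul
    (measurable_ofReal_bergmanWeight_norm α) (by simp)]
  simp_rw [ENNReal.toReal_ofReal (bergmanWeight_nonneg hα (norm_nonneg _)), smul_eq_mul]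
  rw [integral_fun_norm_addHaar volume (fun r => bergmanWeight α r * r ^ (2 * j)),
    bergmanRadialMoment, intervalIntegral.integral_of_le zero_le_one,
    integral_Ioc_eq_integral_Ioo, ← integral_indicator measurableSet_Ioi,
    ← integral_indicator measurableSet_Ioo, nsmul_eq_mul, smul_eq_mul, ← integral_const_mul,
    ← integral_const_mul]
  congr 1
  ext r
  have := Real.pi_ne_zero
  by_cases h0 : 0 < r <;> by_cases h1 : r < 1 <;>
    simp [bergmanWeight, h0, h1, Measure.real, Complex.volume_ball]
  field_simp

theorem isProbabilityMeasure_bergmanMeasure {α : ℝ} (hα : 1 < α) :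
    IsProbabilityMeasure (bergmanMeasure α) := by
  have : IsFiniteMeasure (bergmanMeasure α) := by
    rw [bergmanMeasure_eq_withDensity]
    exact isFiniteMeasure_withDensity_ofReal (integrable_bergmanWeight hα).2
  have h := integral_norm_pow_bergmanMeasure hα 0
  rw [bergmanRadialMoment_zero hα] at h
  refine ⟨?_⟩
  rw [← ENNReal.toReal_eq_one_iff]
  simpa [Measure.real] using h

theorem ae_norm_le_one_bergmanMeasure (α : ℝ) : ∀ᵐ z ∂(bergmanMeasure α), ‖z‖ ≤ 1 := by
  refine (withDensity_absolutelyContinuous _ _).ae_le ?_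
  filter_upwards [ae_restrict_mem measurableSet_ball] with z hz
  exact (mem_ball_zero_iff.1 hz).le

theorem measurePreserving_rotation_bergmanMeasure (α : ℝ) (c : Circle) :
    MeasurePreserving (rotation c) (bergmanMeasure α) (bergmanMeasure α) := by
  have hm : MeasurePreserving (rotation c) volume volume := (rotation c).measurePreserving
  refine ⟨hm.measurable, ?_⟩
  rw [bergmanMeasure_eq_withDensity]
  ext s hs
  rw [Measure.map_apply hm.measurable hs, withDensity_apply _ hs,
    withDensity_apply _ (hm.measurable hs),
    ← hm.setLIntegral_comp_preimage hs (measurable_ofReal_bergmanWeight_norm α)]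
  simp only [LinearIsometryEquiv.norm_map]

open scoped ComplexConjugate

section RotationInvariant

variable {μ : Measure ℂ}

theorem integrable_pi_of_continuous {E : Type*} [NormedAddCommGroup E]
    [IsProbabilityMeasure μ] (hb : ∀ᵐ z ∂μ, ‖z‖ ≤ 1) {n : ℕ} {f : (Fin n → ℂ) → E} (hf : Continuous f) :
    Integrable f (Measure.pi fun _ => μ) := by
  obtain ⟨B, hB⟩ := (isCompact_closedBall (0 : Fin n → ℂ) 1).exists_bound_of_continuousOn
    hf.continuousOn
  refine Integrable.of_bound hf.aestronglyMeasurable B ?_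
  have h : ∀ᵐ z ∂(Measure.pi fun _ : Fin n => μ), ∀ i, ‖z i‖ ≤ 1 :=
    Filter.eventually_all.2 fun i =>
      (Measure.tendsto_eval_ae_ae (μ := fun _ : Fin n => μ) (i := i)).eventually hb
  filter_upwards [h] with z hz
  exact hB z (mem_closedBall_zero_iff.2 ((pi_norm_le_iff_of_nonneg zero_le_one).2 hz))

theorem integrable_of_continuous {E : Type*} [NormedAddCommGroup E]
    [IsProbabilityMeasure μ] (hb : ∀ᵐ z ∂μ, ‖z‖ ≤ 1) {f : ℂ → E} (hf : Continuous f) :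
    Integrable f μ := by
  obtain ⟨B, hB⟩ := (isCompact_closedBall (0 : ℂ) 1).exists_bound_of_continuousOn
    hf.continuousOn
  refine Integrable.of_bound hf.aestronglyMeasurable B ?_
  filter_upwards [hb] with z hz
  exact hB z (mem_closedBall_zero_iff.2 hz)

theorem integral_pow_mul_conj_pow_eq_zero
    (hrot : ∀ c : Circle, MeasurePreserving (rotation c) μ μ) {i j : ℕ} (hij : i ≠ j) :
    ∫ z, z ^ i * conj z ^ j ∂μ = 0 := by
  set c : Circle := Circle.exp (Real.pi / ((i : ℝ) - j)) with hc
  have hne : (i : ℝ) - j ≠ 0 := sub_ne_zero.2 (by exact_mod_cast hij)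
  have hc1 : (c : ℂ) ^ i * conj (c : ℂ) ^ j = -1 := by
    rw [← Circle.coe_inv_eq_conj, hc, ← Circle.exp_neg, Circle.coe_exp, Circle.coe_exp,
      ← Complex.exp_nat_mul, ← Complex.exp_nat_mul, ← Complex.exp_add, ← Complex.exp_pi_mul_I]
    congr 1
    have : (i : ℂ) - j ≠ 0 := by exact_mod_cast hne
    push_cast
    field_simp
    ring
  have h := (hrot c).integral_comp (rotation c).toHomeomorph.measurableEmbedding
    (fun z => z ^ i * conj z ^ j)
  have h2 : ∀ z : ℂ, rotation c z ^ i * conj (rotation c z) ^ j = - (z ^ i * conj z ^ j) := by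
    intro z
    rw [rotation_apply, map_mul, mul_pow, mul_pow]
    linear_combination (z ^ i * conj z ^ j) * hc1
  simp only [h2, integral_neg] at h
  linear_combination (-1 / 2 : ℂ) * h

theorem norm_pow_two_mul_eq (z : ℂ) (k : ℕ) :
    ((‖z‖ ^ (2 * k) : ℝ) : ℂ) = z ^ k * conj z ^ k := by
  rw [← mul_pow, Complex.mul_conj, Complex.normSq_eq_norm_sq, pow_mul]
  push_cast
  rfl

theorem integral_norm_add_pow [IsProbabilityMeasure μ] (hb : ∀ᵐ z ∂μ, ‖z‖ ≤ 1)
    (hrot : ∀ c : Circle, MeasurePreserving (rotation c) μ μ) (w : ℂ) (k : ℕ) :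
    ∫ z, ‖z + w‖ ^ (2 * k) ∂μ = ∑ j ∈ Finset.range (k + 1),
      (k.choose j : ℝ) ^ 2 * ‖w‖ ^ (2 * (k - j)) * ∫ z, ‖z‖ ^ (2 * j) ∂μ := by
  apply Complex.ofReal_injective
  rw [← integral_complex_ofReal]
  have h1 : ∀ z : ℂ, ((‖z + w‖ ^ (2 * k) : ℝ) : ℂ) =
      ∑ i ∈ Finset.range (k + 1), ∑ j ∈ Finset.range (k + 1),
        (k.choose i * k.choose j * w ^ (k - i) * conj w ^ (k - j)) * (z ^ i * conj z ^ j) := by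
    intro z
    rw [norm_pow_two_mul_eq, map_add, add_pow, add_pow, Finset.sum_mul_sum]
    refine Finset.sum_congr rfl fun i _ => Finset.sum_congr rfl fun j _ => ?_
    ring
  have hint : ∀ (a : ℂ) (i j : ℕ), Integrable (fun z : ℂ => a * (z ^ i * conj z ^ j)) μ :=
    fun a i j => integrable_of_continuous hb (by fun_prop)
  simp_rw [h1]
  rw [integral_finsetSum _ fun i _ => integrable_finsetSum _ fun j _ => hint _ _ _,
    Complex.ofReal_sum]
  refine Finset.sum_congr rfl fun i hi => ?_
  rw [integral_finsetSum _ fun j _ => hint _ _ _, Finset.sum_eq_single i]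
  · rw [integral_const_mul, Complex.ofReal_mul, ← integral_complex_ofReal, Complex.ofReal_mul,
      norm_pow_two_mul_eq]
    simp_rw [norm_pow_two_mul_eq]
    push_cast
    ring
  · intro j _ hj
    rw [integral_const_mul, integral_pow_mul_conj_pow_eq_zero hrot hj.symm, mul_zero]
  · exact fun h => absurd hi h

theorem integral_norm_sum_pow_succ [IsProbabilityMeasure μ] (hb : ∀ᵐ z ∂μ, ‖z‖ ≤ 1)
    (hrot : ∀ c : Circle, MeasurePreserving (rotation c) μ μ) (n k : ℕ) :
    ∫ z : Fin (n + 1) → ℂ, ‖∑ i, z i‖ ^ (2 * k) ∂(Measure.pi fun _ => μ) =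
      ∑ j ∈ Finset.range (k + 1), (k.choose j : ℝ) ^ 2 *
        (∫ z : Fin n → ℂ, ‖∑ i, z i‖ ^ (2 * (k - j)) ∂(Measure.pi fun _ => μ)) *
        ∫ z, ‖z‖ ^ (2 * j) ∂μ := by
  have hmp := (measurePreserving_piFinSuccAbove (fun _ : Fin (n + 1) => μ) 0).symm
  have hint : Integrable (fun z : Fin (n + 1) → ℂ => ‖∑ i, z i‖ ^ (2 * k))
      (Measure.pi fun _ => μ) := integrable_pi_of_continuous hb (by fun_prop)
  rw [← hmp.integral_comp']
  have hint' := (hmp.integrable_comp_emb (MeasurableEquiv.measurableEmbedding _)).2 hint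
  simp only [Function.comp_def] at hint'
  rw [integral_prod_symm _ hint']
  simp only [MeasurableEquiv.piFinSuccAbove_symm_apply, Fin.insertNthEquiv_apply,
    Fin.insertNth_zero', Fin.sum_univ_succ, Fin.cons_zero, Fin.cons_succ,
    integral_norm_add_pow hb hrot]
  rw [integral_finsetSum _ fun j _ => integrable_pi_of_continuous hb (by fun_prop)]
  refine Finset.sum_congr rfl fun j _ => ?_
  rw [integral_mul_const, integral_const_mul]

theorem integral_norm_sum_pow_le [IsProbabilityMeasure μ] (hb : ∀ᵐ z ∂μ, ‖z‖ ≤ 1)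
    (hrot : ∀ c : Circle, MeasurePreserving (rotation c) μ μ) {a : ℝ} (ha : 0 ≤ a)
    (hmom : ∀ j : ℕ, ∫ z, ‖z‖ ^ (2 * j) ∂μ ≤ j.factorial * a ^ j) (n k : ℕ) :
    ∫ z : Fin n → ℂ, ‖∑ i, z i‖ ^ (2 * k) ∂(Measure.pi fun _ => μ) ≤
      k.factorial * a ^ k * n ^ k := by
  induction n generalizing k with
  | zero =>
    rcases Nat.eq_zero_or_pos k with rfl | hk
    · simp
    · simp [hk.ne']
  | succ n ih =>
    rw [integral_norm_sum_pow_succ hb hrot]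
    push_cast
    rw [add_comm (n : ℝ) 1, add_pow, Finset.mul_sum]
    refine Finset.sum_le_sum fun j hj => ?_
    have hjk : j ≤ k := Nat.lt_succ_iff.1 (Finset.mem_range.1 hj)
    calc _ ≤ (k.choose j : ℝ) ^ 2 * ((k - j).factorial * a ^ (k - j) * n ^ (k - j)) *
          (j.factorial * a ^ j) :=
          mul_le_mul (mul_le_mul_of_nonneg_left (ih _) (by positivity)) (hmom j)
            (by positivity) (by positivity)
      _ = _ := by
          have h1 : (k.choose j : ℝ) * j.factorial * (k - j).factorial = k.factorial := by
            exact_mod_cast Nat.choose_mul_factorial_mul_factorial hjk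
          have h2 : a ^ (k - j) * a ^ j = a ^ k := by rw [← pow_add, Nat.sub_add_cancel hjk]
          rw [← h1, ← h2]
          ring

theorem le_integral_norm_sum_pow [IsProbabilityMeasure μ] (hb : ∀ᵐ z ∂μ, ‖z‖ ≤ 1)
    (hrot : ∀ c : Circle, MeasurePreserving (rotation c) μ μ) {a : ℝ} (ha : 0 ≤ a)
    (hmom : ∫ z, ‖z‖ ^ 2 ∂μ = a) (n k : ℕ) :
    k.factorial * a ^ k * n.descFactorial k ≤
      ∫ z : Fin n → ℂ, ‖∑ i, z i‖ ^ (2 * k) ∂(Measure.pi fun _ => μ) := by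
  induction n generalizing k with
  | zero =>
    rcases k with _ | k
    · simp
    · simp
  | succ n ih =>
    rw [integral_norm_sum_pow_succ hb hrot]
    rcases k with _ | k
    · simp
    · have hsub : Finset.range 2 ⊆ Finset.range (k + 1 + 1) := by
        simp
      refine le_trans ?_ (Finset.sum_le_sum_of_subset_of_nonneg hsub
        fun j _ _ => by positivity)
      rw [Finset.sum_range_succ, Finset.sum_range_one]
      have h0 := ih (k + 1)
      have h1 := ih k
      have h2 : ((n + 1).descFactorial (k + 1) : ℝ) =
          n.descFactorial (k + 1) + (k + 1) * n.descFactorial k := by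
        have := Nat.succ_descFactorial_succ n k
        have h3 : n.descFactorial (k + 1) = (n - k) * n.descFactorial k :=
          Nat.descFactorial_succ n k
        rw [this, h3]
        rcases le_or_gt k n with h | h
        · push_cast [Nat.cast_sub h]; ring
        · simp [Nat.descFactorial_of_lt h]
      simp only [Nat.choose_zero_right, Nat.cast_one, one_pow, one_mul, Nat.sub_zero, mul_zero,
        pow_zero, integral_const, probReal_univ, smul_eq_mul, mul_one, Nat.choose_one_right,
        Nat.add_sub_cancel, hmom]
      rw [h2]
      calc _ = ((k + 1).factorial : ℝ) * a ^ (k + 1) * n.descFactorial (k + 1) +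
            ((k + 1 : ℕ) : ℝ) ^ 2 * (k.factorial * a ^ k * n.descFactorial k) * a := by
            rw [Nat.factorial_succ]; push_cast; ring
        _ ≤ _ := by gcongr

end RotationInvariant

/-- Lyapunov's moment inequality for a nonnegative function on a probability space. -/
theorem integral_rpow_rpow_div_le {Ω : Type*} [MeasurableSpace Ω] {ν : Measure Ω}
    [IsProbabilityMeasure ν] {f : Ω → ℝ} (hf : ∀ x, 0 ≤ f x) {s t : ℝ} (hs : 0 < s) (hst : s ≤ t)
    (his : Integrable (fun x => f x ^ s) ν) (hit : Integrable (fun x => f x ^ t) ν) :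
    (∫ x, f x ^ s ∂ν) ^ (t / s) ≤ ∫ x, f x ^ t ∂ν := by
  have he : ∀ x, (f x ^ s) ^ (t / s) = f x ^ t := fun x => by
    rw [← Real.rpow_mul (hf x), mul_div_cancel₀ _ hs.ne']
  have h1 : 1 ≤ t / s := (one_le_div hs).2 hst
  have h := (convexOn_rpow h1).map_integral_le (μ := ν) (f := fun x => f x ^ s)
    (Real.continuous_rpow_const (by linarith)).continuousOn isClosed_Ici
    (Filter.Eventually.of_forall fun x => Real.rpow_nonneg (hf x) s) his
    (by simpa only [Function.comp_def, he] using hit)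
  simpa only [he] using h

theorem div_exp_le_factorial_rpow {l : ℕ} (hl : 0 < l) :
    (l : ℝ) / Real.exp 1 ≤ (l.factorial : ℝ) ^ (1 / (l : ℝ)) := by
  have hl' : (0 : ℝ) < l := by exact_mod_cast hl
  have h := Real.pow_div_factorial_le_exp (x := l) hl'.le l
  have hle : ((l : ℝ) / Real.exp 1) ^ l ≤ l.factorial := by
    rw [div_pow, ← Real.exp_nat_mul, mul_one, div_le_iff₀ (Real.exp_pos _)]
    rwa [div_le_iff₀ (by positivity), mul_comm] at h
  calc (l : ℝ) / Real.exp 1 = (((l : ℝ) / Real.exp 1) ^ l) ^ (1 / (l : ℝ)) := by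
        rw [one_div, Real.pow_rpow_inv_natCast (by positivity) hl.ne']
    _ ≤ _ := by gcongr

theorem factorial_le_exp_mul {k : ℕ} (hk : 0 < k) :
    (k.factorial : ℝ) ≤ Real.exp 1 * k * (k / Real.exp 1) ^ k := by
  obtain ⟨j, rfl⟩ := Nat.exists_eq_succ_of_ne_zero hk.ne'
  have h := Stirling.stirlingSeq'_antitone (Nat.zero_le j)
  simp only [Function.comp_apply, Nat.succ_eq_add_one, zero_add, Stirling.stirlingSeq_one] at h
  rw [Stirling.stirlingSeq, div_le_iff₀ (by positivity)] at h
  refine h.trans ?_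
  set x : ℝ := ((j + 1 : ℕ) : ℝ) with hx
  have hx1 : 1 ≤ x := by rw [hx]; exact_mod_cast Nat.succ_le_succ (Nat.zero_le j)
  have hsx : √x ≤ x := by
    rw [Real.sqrt_le_left (by linarith)]
    nlinarith
  rw [Real.sqrt_mul (by norm_num)]
  calc _ = Real.exp 1 * √x * (x / Real.exp 1) ^ (j + 1) := by
        have : √(2 : ℝ) ≠ 0 := by positivity
        field_simp
    _ ≤ _ := by gcongr

theorem factorial_rpow_le {k : ℕ} (hk : 0 < k) :
    (k.factorial : ℝ) ^ (1 / (k : ℝ)) ≤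
      Real.exp 1 ^ (1 / (k : ℝ)) * (k : ℝ) ^ (1 / (k : ℝ)) * (k / Real.exp 1) := by
  calc _ ≤ (Real.exp 1 * k * (k / Real.exp 1) ^ k) ^ (1 / (k : ℝ)) := by
        gcongr
        exact factorial_le_exp_mul hk
    _ = _ := by
        rw [Real.mul_rpow (by positivity) (by positivity),
          Real.mul_rpow (by positivity) (by positivity), one_div,
          Real.pow_rpow_inv_natCast (by positivity) hk.ne']

theorem totalDegree_sum_X_pow {n : ℕ} (hn : 0 < n) (m : ℕ) :
    ((∑ i, MvPolynomial.X i : MvPolynomial (Fin n) ℂ) ^ m).totalDegree = m := by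
  have h : ((∑ i, MvPolynomial.X i : MvPolynomial (Fin n) ℂ) ^ m).IsHomogeneous (1 * m) :=
    (MvPolynomial.IsHomogeneous.sum _ _ _ fun i _ => MvPolynomial.isHomogeneous_X _ i).pow m
  rw [h.totalDegree, one_mul]
  refine pow_ne_zero _ fun h0 => ?_
  have h1 := congrArg (MvPolynomial.eval fun _ => (1 : ℂ)) h0
  simp at h1
  omega

theorem moment_comparison
    {α β p q : ℝ} (hα : 1 < α) (hβ : 1 < β) (hp : 0 < p) (hq : 0 < q) {C : ℝ} (hC : 0 < C)
    {m n l k : ℕ} (hm : 0 < m) (hl : 0 < l) (hk : 0 < k)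
    (hlq : (2 * l : ℝ) ≤ m * q) (hkp : m * p ≤ (2 * k : ℝ))
    (H : (∫ z : Fin n → ℂ, ‖(∑ i, z i) ^ m‖ ^ q ∂(bergmanMeasurePi n β)) ^ (1 / q) ≤
        C ^ m * (∫ z : Fin n → ℂ, ‖(∑ i, z i) ^ m‖ ^ p ∂(bergmanMeasurePi n α)) ^ (1 / p)) :
    (l.factorial * β⁻¹ ^ l * n.descFactorial l : ℝ) ^ (1 / (l : ℝ)) ≤
      C ^ 2 * (k.factorial * α⁻¹ ^ k * n ^ k : ℝ) ^ (1 / (k : ℝ)) := by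
  have := isProbabilityMeasure_bergmanMeasure hα
  have := isProbabilityMeasure_bergmanMeasure hβ
  have hα0 : 0 < α := by linarith
  have hβ0 : 0 < β := by linarith
  have hm' : (0 : ℝ) < m := by exact_mod_cast hm
  have hl' : (0 : ℝ) < l := by exact_mod_cast hl
  have hk' : (0 : ℝ) < k := by exact_mod_cast hk
  have hL := le_integral_norm_sum_pow (ae_norm_le_one_bergmanMeasure β)
    (measurePreserving_rotation_bergmanMeasure β) (inv_nonneg.2 hβ0.le)
    (by simpa [bergmanRadialMoment_one hβ] using integral_norm_pow_bergmanMeasure hβ 1) n l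
  have hU := integral_norm_sum_pow_le (ae_norm_le_one_bergmanMeasure α)
    (measurePreserving_rotation_bergmanMeasure α) (inv_nonneg.2 hα0.le)
    (fun j => by
      rw [integral_norm_pow_bergmanMeasure hα]
      exact bergmanRadialMoment_le hα j) n k
  unfold bergmanMeasurePi at H
  set μα := Measure.pi fun _ : Fin n => bergmanMeasure α
  set μβ := Measure.pi fun _ : Fin n => bergmanMeasure β
  have hcont : ∀ s : ℝ, 0 ≤ s → Continuous fun z : Fin n → ℂ => ‖∑ i, z i‖ ^ s :=
    fun s hs => Continuous.rpow_const (by fun_prop) fun _ => Or.inr hs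
  have hiα : ∀ s : ℝ, 0 ≤ s → Integrable (fun z : Fin n → ℂ => ‖∑ i, z i‖ ^ s) μα :=
    fun s hs => integrable_pi_of_continuous (ae_norm_le_one_bergmanMeasure α) (hcont s hs)
  have hiβ : ∀ s : ℝ, 0 ≤ s → Integrable (fun z : Fin n → ℂ => ‖∑ i, z i‖ ^ s) μβ :=
    fun s hs => integrable_pi_of_continuous (ae_norm_le_one_bergmanMeasure β) (hcont s hs)
  have hpow : ∀ (z : Fin n → ℂ) (s : ℝ), ‖(∑ i, z i) ^ m‖ ^ s = ‖∑ i, z i‖ ^ (m * s) := by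
    intro z s
    rw [norm_pow, ← Real.rpow_natCast, ← Real.rpow_mul (norm_nonneg _)]
  have heven : ∀ (z : Fin n → ℂ) (j : ℕ), ‖∑ i, z i‖ ^ (2 * j) = ‖∑ i, z i‖ ^ (2 * j : ℝ) := by
    intro z j
    rw [← Real.rpow_natCast]
    push_cast
    rfl
  simp only [hpow] at H
  simp only [heven] at hL hU
  have hLβ := integral_rpow_rpow_div_le (ν := μβ) (fun z => norm_nonneg (∑ i, z i))
    (by positivity) hlq (hiβ _ (by positivity)) (hiβ _ (by positivity))
  have hUα := integral_rpow_rpow_div_le (ν := μα) (fun z => norm_nonneg (∑ i, z i))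
    (by positivity) hkp (hiα _ (by positivity)) (hiα _ (by positivity))
  set L : ℝ := l.factorial * β⁻¹ ^ l * n.descFactorial l
  set U : ℝ := k.factorial * α⁻¹ ^ k * n ^ k
  have hL0 : 0 ≤ L := by positivity
  have hU0 : 0 ≤ U := by positivity
  set Iα := ∫ z : Fin n → ℂ, ‖∑ i, z i‖ ^ (m * p) ∂μα
  set Iβ := ∫ z : Fin n → ℂ, ‖∑ i, z i‖ ^ (m * q) ∂μβ
  have hIα : 0 ≤ Iα := integral_nonneg fun z => by positivity
  have h1 : L ^ (m / (2 * l) : ℝ) ≤ Iβ ^ (1 / q) := by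
    have h : L ^ (m * q / (2 * l)) ≤ Iβ := le_trans (by gcongr) hLβ
    calc L ^ (m / (2 * l) : ℝ) = (L ^ (m * q / (2 * l))) ^ (1 / q) := by
          rw [← Real.rpow_mul hL0]; congr 1; field_simp
      _ ≤ _ := by gcongr
  have h2 : Iα ^ (1 / p) ≤ U ^ (m / (2 * k) : ℝ) := by
    calc Iα ^ (1 / p) = (Iα ^ (2 * k / (m * p))) ^ (m / (2 * k) : ℝ) := by
          rw [← Real.rpow_mul hIα]; congr 1; field_simp
      _ ≤ _ := by
          gcongr
          exact hUα.trans hU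
  have h3 : L ^ (m / (2 * l) : ℝ) ≤ C ^ m * U ^ (m / (2 * k) : ℝ) :=
    h1.trans (H.trans (by gcongr))
  calc L ^ (1 / (l : ℝ)) = (L ^ (m / (2 * l) : ℝ)) ^ (2 / m : ℝ) := by
        rw [← Real.rpow_mul hL0]; congr 1; field_simp
    _ ≤ (C ^ m * U ^ (m / (2 * k) : ℝ)) ^ (2 / m : ℝ) := by gcongr
    _ = C ^ 2 * U ^ (1 / (k : ℝ)) := by
        rw [Real.mul_rpow (by positivity) (by positivity), ← Real.rpow_mul hU0,
          ← Real.rpow_natCast C m, ← Real.rpow_mul hC.le, ← Real.rpow_natCast C 2]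
        congr 2 <;> push_cast <;> field_simp

theorem factorial_rpow_comparison {α β C : ℝ} (hα : 0 < α) (hβ : 0 < β) {l k : ℕ}
    (hl : 0 < l) (hk : 0 < k)
    (h : ∀ n : ℕ, 0 < n → (l.factorial * β⁻¹ ^ l * n.descFactorial l : ℝ) ^ (1 / (l : ℝ)) ≤
      C ^ 2 * (k.factorial * α⁻¹ ^ k * n ^ k : ℝ) ^ (1 / (k : ℝ))) :
    (l.factorial : ℝ) ^ (1 / (l : ℝ)) * α ≤
      C ^ 2 * β * (k.factorial : ℝ) ^ (1 / (k : ℝ)) := by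
  set A := (l.factorial : ℝ) ^ (1 / (l : ℝ)) with hA
  set B := (k.factorial : ℝ) ^ (1 / (k : ℝ)) with hB
  have hbound : ∀ n : ℕ, l ≤ n → A * α * (1 - l / n) ≤ C ^ 2 * β * B := by
    intro n hn
    have hn0 : 0 < n := hl.trans_le hn
    have hn' : (0 : ℝ) < n := by exact_mod_cast hn0
    have hln : (0 : ℝ) ≤ n - l := sub_nonneg.2 (by exact_mod_cast hn)
    have hdesc : ((n : ℝ) - l) ^ l ≤ n.descFactorial l := by
      rw [← Nat.cast_sub hn]
      exact_mod_cast (Nat.pow_le_pow_left (by omega) l).trans (Nat.pow_sub_le_descFactorial n l)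
    have h1 : A * β⁻¹ * (n - l) ≤
        (l.factorial * β⁻¹ ^ l * n.descFactorial l : ℝ) ^ (1 / (l : ℝ)) := by
      calc A * β⁻¹ * (n - l)
          = (l.factorial * β⁻¹ ^ l * ((n : ℝ) - l) ^ l) ^ (1 / (l : ℝ)) := by
            rw [Real.mul_rpow (by positivity) (by positivity),
              Real.mul_rpow (by positivity) (by positivity), hA, one_div,
              Real.pow_rpow_inv_natCast (by positivity) hl.ne',
              Real.pow_rpow_inv_natCast (by positivity) hl.ne']
        _ ≤ _ := by gcongr
    have h2 : (k.factorial * α⁻¹ ^ k * n ^ k : ℝ) ^ (1 / (k : ℝ)) = B * α⁻¹ * n := by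
      rw [Real.mul_rpow (by positivity) (by positivity),
        Real.mul_rpow (by positivity) (by positivity), hB, one_div,
        Real.pow_rpow_inv_natCast (by positivity) hk.ne',
        Real.pow_rpow_inv_natCast (by positivity) hk.ne']
    have h3 := h1.trans (h n hn0)
    rw [h2] at h3
    calc A * α * (1 - l / n) = A * β⁻¹ * (n - l) * (α * β / n) := by field_simp
      _ ≤ C ^ 2 * (B * α⁻¹ * n) * (α * β / n) := by gcongr
      _ = _ := by field_simp
  have hlim : Filter.Tendsto (fun n : ℕ => A * α * (1 - l / (n : ℝ))) Filter.atTop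
      (nhds (A * α * (1 - 0))) :=
    ((tendsto_const_div_atTop_nhds_zero_nat (l : ℝ)).const_sub 1).const_mul _
  rw [sub_zero, mul_one] at hlim
  exact le_of_tendsto hlim (Filter.eventually_atTop.2 ⟨l, hbound⟩)

/-- Sharpness of the constant in Theorem 1.3: if `C > 0` satisfies
`‖P‖_{A_β^q(𝔻ⁿ)} ≤ C^m ‖P‖_{A_α^p(𝔻ⁿ)}` for all positive integers `m, n` and all
complex polynomials `P` in `n` variables of degree `m`, then `C ≥ √(αq/(βp))`. -/
theorem nikolskii_bergman_sharp
    (α β p q : ℝ) (hα : 1 < α) (hβ : 1 < β) (hp : 0 < p) (hpq : p ≤ q)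
    (hq2 : 2 ≤ q) (hβpαq : β * p ≤ α * q)
    (C : ℝ) (hC : 0 < C)
    (H : ∀ m n : ℕ, 0 < m → 0 < n → ∀ P : MvPolynomial (Fin n) ℂ,
      P.totalDegree = m →
      (∫ z, ‖MvPolynomial.eval z P‖ ^ q ∂(bergmanMeasurePi n β)) ^ (1 / q) ≤
        C ^ m * (∫ z, ‖MvPolynomial.eval z P‖ ^ p ∂(bergmanMeasurePi n α)) ^ (1 / p)) :
    Real.sqrt (α * q / (β * p)) ≤ C := by
  have hα0 : 0 < α := by linarith
  have hβ0 : 0 < β := by linarith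
  have hq : 0 < q := by linarith
  have key : ∀ m : ℕ, 0 < m →
      ((⌊q / 2 * m⌋₊ : ℝ) / m) * α ≤ C ^ 2 * β *
        (Real.exp 1 ^ (1 / (⌈p / 2 * m⌉₊ : ℝ)) *
          (⌈p / 2 * m⌉₊ : ℝ) ^ (1 / (⌈p / 2 * m⌉₊ : ℝ)) * ((⌈p / 2 * m⌉₊ : ℝ) / m)) := by
    intro m hm
    have hm' : (1 : ℝ) ≤ m := by exact_mod_cast hm
    set l := ⌊q / 2 * m⌋₊
    set k := ⌈p / 2 * m⌉₊
    have hl : 0 < l := Nat.floor_pos.2 (by nlinarith)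
    have hk : 0 < k := Nat.ceil_pos.2 (by positivity)
    have hlq : (l : ℝ) ≤ q / 2 * m := Nat.floor_le (by positivity)
    have hkp : p / 2 * m ≤ k := Nat.le_ceil _
    have h := factorial_rpow_comparison hα0 hβ0 hl hk fun n hn =>
      moment_comparison hα hβ hp hq hC hm hl hk (by linarith) (by linarith)
        (by simpa using H m n hm hn _ (totalDegree_sum_X_pow hn m))
    have h1 := (mul_le_mul_of_nonneg_right (div_exp_le_factorial_rpow hl) hα0.le).trans
      (h.trans (mul_le_mul_of_nonneg_left (factorial_rpow_le hk) (by positivity)))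
    have h2 := mul_le_mul_of_nonneg_right h1
      (show (0 : ℝ) ≤ Real.exp 1 / m by positivity)
    have he := (Real.exp_pos 1).ne'
    calc (l : ℝ) / m * α = l / Real.exp 1 * α * (Real.exp 1 / m) := by field_simp
      _ ≤ _ := h2
      _ = _ := by field_simp
  have hcast : Filter.Tendsto (fun m : ℕ => (m : ℝ)) Filter.atTop Filter.atTop :=
    tendsto_natCast_atTop_atTop
  have hfl := (tendsto_nat_floor_mul_div_atTop (R := ℝ) (by positivity : 0 ≤ q / 2)).comp hcast
  have hcl := (tendsto_nat_ceil_mul_div_atTop (R := ℝ) (by positivity : 0 ≤ p / 2)).comp hcast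
  have hk : Filter.Tendsto (fun m : ℕ => (⌈p / 2 * m⌉₊ : ℝ)) Filter.atTop Filter.atTop :=
    Filter.tendsto_atTop_mono (fun m => Nat.le_ceil _)
      (hcast.const_mul_atTop (by positivity : 0 < p / 2))
  have hkk := tendsto_rpow_div.comp hk
  have hek : Filter.Tendsto (fun m : ℕ => Real.exp 1 ^ (1 / (⌈p / 2 * m⌉₊ : ℝ))) Filter.atTop
      (nhds 1) := by
    have h := (tendsto_const_nhds (x := Real.exp 1)).rpow (tendsto_inv_atTop_zero.comp hk)
      (Or.inl (Real.exp_pos 1).ne')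
    simpa [Function.comp_def] using h
  have hlim := le_of_tendsto_of_tendsto (hfl.mul_const α)
    (((hek.mul hkk).mul hcl).const_mul (C ^ 2 * β))
    (Filter.eventually_atTop.2 ⟨1, fun m hm => key m hm⟩)
  refine Real.sqrt_le_iff.2 ⟨hC.le, ?_⟩
  rw [div_le_iff₀ (by positivity)]
  linarith
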